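/- Let λ > 0 and β ∈ (0,1]. For every ε > 0 there exist constants C_ε > 0 and σ_ε > 0 such that for all n ∈ ℕ₀ and all x ∈ ℝ, |C_n^{λ,β}(x)| ≤ C_ε · n! · σ_ε^{−n} · e^{ε|x|}. -/

import Mathlib

/-!
The generating function `G_x(z) = e^{x log(1+z)} / E_β(λz)` is holomorphic near `0`, because `Γ` is
bounded below on `[1, ∞)` (so `E_β` is holomorphic on the unit disc) and `E_β(0) = 1`.
Choosing a disc of radius `σ` so small that `|log(1+z)| ≤ ε` and `|E_β(λz)| ≥ 1/2` on it,
`|G_x| ≤ 2 e^{ε|x|}` there, and Cauchy's estimate gives the claim with `C = 2`.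
-/

open MeasureTheory Finset
open scoped ENNReal NNReal

noncomputable section

/-- The complex Mittag-Leffler function `E_β(z) = ∑ zⁿ / Γ(βn+1)`. -/
def mittagLeffler (β : ℝ) (z : ℂ) : ℂ :=
  ∑' n : ℕ, z ^ n / (Complex.Gamma ((β * n + 1 : ℝ) : ℂ))

/-- The real Mittag-Leffler function `E_β(x) = ∑ xⁿ / Γ(βn+1)`. -/
def mittagLefflerR (β : ℝ) (x : ℝ) : ℝ :=
  ∑' n : ℕ, x ^ n / Real.Gamma (β * n + 1)

/-- The fractional Poisson measure `π_{λ,β} = ∑_k (λᵏ/k!) E_β⁽ᵏ⁾(-λ) δ_k` on `ℝ`. -/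
def fracPoisson (lam β : ℝ) : Measure ℝ :=
  Measure.sum fun k : ℕ =>
    ENNReal.ofReal (lam ^ k / k.factorial * iteratedDeriv k (mittagLefflerR β) (-lam)) •
      Measure.dirac (k : ℝ)

/-- The Poisson measure with rate `μ` on `ℝ`, `π_μ({k}) = (μᵏ/k!) e^{-μ}`. -/
def poissonMeasureR (μ : ℝ) : Measure ℝ :=
  Measure.sum fun k : ℕ =>
    ENNReal.ofReal (μ ^ k / k.factorial * Real.exp (-μ)) • Measure.dirac (k : ℝ)

/-- The generalized Appell polynomials
`C_n^{λ,β}(x) = dⁿ/dzⁿ [e^{x log(1+z)} / E_β(λz)]` at `z = 0`. -/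
def genAppell (lam β : ℝ) (n : ℕ) (x : ℂ) : ℂ :=
  iteratedDeriv n
    (fun z : ℂ => Complex.exp (x * Complex.log (1 + z)) / mittagLeffler β (lam * z)) 0

/-- The Appell polynomials `A_n^{λ,β}(x) = dⁿ/dzⁿ [e^{zx} / E_β(λ(eᶻ-1))]` at `z = 0`. -/
def appell (lam β : ℝ) (n : ℕ) (x : ℂ) : ℂ :=
  iteratedDeriv n
    (fun z : ℂ => Complex.exp (z * x) / mittagLeffler β (lam * (Complex.exp z - 1))) 0

/-- Stirling numbers of the first kind, via `(log(1+z))^k = k! ∑_{n≥k} s(n,k) zⁿ/n!`. -/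
def stirlingFst (n k : ℕ) : ℝ :=
  iteratedDeriv n (fun x : ℝ => (Real.log (1 + x)) ^ k) 0 / k.factorial

/-- Stirling numbers of the second kind, via `(eᶻ-1)^k = k! ∑_{n≥k} S(n,k) zⁿ/n!`. -/
def stirlingSnd (n k : ℕ) : ℝ :=
  iteratedDeriv n (fun x : ℝ => (Real.exp x - 1) ^ k) 0 / k.factorial

/-- The `n`-th moment of the fractional Poisson measure. -/
def fpMoment (lam β : ℝ) (n : ℕ) : ℝ := ∫ x, x ^ n ∂(fracPoisson lam β)

/-- `M̃_{λ,β}(m) = m! λᵐ / Γ(mβ+1)`. -/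
def tildeM (lam β : ℝ) (m : ℕ) : ℝ := m.factorial * lam ^ m / Real.Gamma (m * β + 1)

/-- The (partial exponential) Bell polynomials `B_{n,k}(x₁, …, x_{n-k+1})`. -/
def bellPoly (n k : ℕ) (x : ℕ → ℂ) : ℂ :=
  ∑ j ∈ (Fintype.piFinset fun _ : Fin (n - k + 1) => Finset.range (n + 1)).filter
      (fun j => (∑ i, j i) = k ∧ (∑ i, (i.1 + 1) * j i) = n),
    (n.factorial : ℂ) / (∏ i, ((j i).factorial : ℂ)) *
      ∏ i, (x (i.1 + 1) / ((i.1 + 1).factorial : ℂ)) ^ j i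

/-- `Γ` is positive and continuous on `[1, 2]` and increasing on `[2, ∞)`. -/
lemma exists_pos_le_Gamma : ∃ m : ℝ, 0 < m ∧ ∀ s : ℝ, 1 ≤ s → m ≤ Real.Gamma s := by
  have hcont : ContinuousOn Real.Gamma (Set.Icc 1 2) := by
    intro s hs
    refine (Real.differentiableAt_Gamma fun k => ?_).continuousAt.continuousWithinAt
    have : (0 : ℝ) ≤ k := k.cast_nonneg
    linarith [hs.1]
  obtain ⟨t, ht, hmin⟩ := isCompact_Icc.exists_isMinOn (Set.nonempty_Icc.2 (by norm_num)) hcont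
  refine ⟨Real.Gamma t, Real.Gamma_pos_of_pos (by linarith [ht.1]), fun s hs => ?_⟩
  rcases le_total s 2 with h | h
  · exact hmin ⟨hs, h⟩
  · exact (hmin (Set.right_mem_Icc.2 (by norm_num))).trans
      (Real.Gamma_strictMonoOn_Ici.monotoneOn Set.self_mem_Ici h h)

/-- The unit disc is enough here, although `E_β` is entire. -/
lemma differentiableOn_mittagLeffler {β : ℝ} (hβ : 0 < β) :
    DifferentiableOn ℂ (mittagLeffler β) (Metric.ball 0 1) := by
  obtain ⟨m, hm, hΓ⟩ := exists_pos_le_Gamma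
  have key : ∀ z ∈ Metric.ball (0 : ℂ) 1, DifferentiableAt ℂ (mittagLeffler β) z := by
    intro z hz
    obtain ⟨r, hzr, hr1⟩ := exists_between (mem_ball_zero_iff.1 hz)
    have hr0 : 0 ≤ r := (norm_nonneg z).trans hzr.le
    have hdiff : DifferentiableOn ℂ (mittagLeffler β) (Metric.ball 0 r) := by
      refine Complex.differentiableOn_tsum_of_summable_norm (u := fun n : ℕ => r ^ n / m)
        ((summable_geometric_of_lt_one hr0 hr1).div_const m) (fun n => by fun_prop)
        Metric.isOpen_ball fun n w hw => ?_
      have hs : (1 : ℝ) ≤ β * n + 1 := by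
        have : 0 ≤ β * n := by positivity
        linarith
      have hG := hΓ _ hs
      rw [Complex.Gamma_ofReal, norm_div, norm_pow, Complex.norm_real, Real.norm_eq_abs,
        abs_of_pos (hm.trans_le hG)]
      have hw' : ‖w‖ ≤ r := (mem_ball_zero_iff.1 hw).le
      gcongr
    exact hdiff.differentiableAt (Metric.isOpen_ball.mem_nhds (mem_ball_zero_iff.2 hzr))
  exact fun z hz => (key z hz).differentiableWithinAt

lemma mittagLeffler_zero (β : ℝ) : mittagLeffler β 0 = 1 := by
  rw [mittagLeffler, tsum_eq_single 0 fun n hn => by simp [hn]]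
  simp

theorem stmt9 (lam β : ℝ) (hlam : 0 < lam) (hβ0 : 0 < β) (hβ1 : β ≤ 1)
    (ε : ℝ) (hε : 0 < ε) :
    ∃ C σ : ℝ, 0 < C ∧ 0 < σ ∧ ∀ (n : ℕ) (x : ℝ),
      ‖genAppell lam β n x‖ ≤ C * n.factorial * σ⁻¹ ^ n * Real.exp (ε * |x|) := by
  have hE := differentiableOn_mittagLeffler hβ0
  have hmul : Filter.Tendsto (fun z : ℂ => (lam : ℂ) * z) (nhds 0) (nhds 0) :=
    Continuous.tendsto' (by fun_prop) _ _ (by simp)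
  have hE0 : Filter.Tendsto (mittagLeffler β) (nhds 0) (nhds 1) := by
    rw [← mittagLeffler_zero β]
    exact (hE.differentiableAt (Metric.ball_mem_nhds 0 one_pos)).continuousAt
  have h1 : ∀ᶠ z : ℂ in nhds 0, (lam : ℂ) * z ∈ Metric.ball (0 : ℂ) 1 :=
    hmul.eventually (Metric.ball_mem_nhds 0 one_pos)
  have h2 : ∀ᶠ z : ℂ in nhds 0, 1 / 2 < ‖mittagLeffler β (lam * z)‖ :=
    (hE0.comp hmul).norm.eventually_const_lt (by norm_num)
  have hlog : Filter.Tendsto (fun z : ℂ => Complex.log (1 + z)) (nhds 0) (nhds 0) := by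
    have : ContinuousAt (fun z : ℂ => Complex.log (1 + z)) 0 :=
      ContinuousAt.clog (by fun_prop) (by simp)
    simpa [ContinuousAt] using this
  have h3 : ∀ᶠ z : ℂ in nhds 0, ‖Complex.log (1 + z)‖ < ε :=
    hlog.norm.eventually_lt_const (by simpa using hε)
  have h4 : ∀ᶠ z : ℂ in nhds 0, 1 + z ∈ Complex.slitPlane :=
    (show ContinuousAt (fun z : ℂ => 1 + z) 0 by fun_prop).eventually
      (Complex.isOpen_slitPlane.mem_nhds (by simp))
  obtain ⟨σ, hσ, hball⟩ := Metric.nhds_basis_closedBall.eventually_iff.1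
    (h1.and (h2.and (h3.and h4)))
  refine ⟨2, σ, two_pos, hσ, fun n x => ?_⟩
  have hG : DifferentiableOn ℂ (fun z : ℂ => Complex.exp (x * Complex.log (1 + z)) /
      mittagLeffler β (lam * z)) (Metric.closedBall 0 σ) := by
    intro z hz
    obtain ⟨hz1, hz2, -, hz4⟩ := hball hz
    refine DifferentiableAt.differentiableWithinAt (DifferentiableAt.div ?_ ?_ ?_)
    · exact ((DifferentiableAt.clog (by fun_prop) hz4).const_mul _).cexp
    · exact (hE.differentiableAt (Metric.isOpen_ball.mem_nhds hz1)).comp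
        (f := fun z : ℂ => (lam : ℂ) * z) z (by fun_prop)
    · exact norm_pos_iff.1 (by linarith)
  have hbound : ∀ z ∈ Metric.sphere (0 : ℂ) σ, ‖Complex.exp (x * Complex.log (1 + z)) /
      mittagLeffler β (lam * z)‖ ≤ 2 * Real.exp (ε * |x|) := by
    intro z hz
    obtain ⟨-, hz2, hz3, -⟩ := hball (Metric.sphere_subset_closedBall hz)
    have hexp : ‖Complex.exp (x * Complex.log (1 + z))‖ ≤ Real.exp (ε * |x|) := by
      rw [Complex.norm_exp]
      refine Real.exp_le_exp.2 ((Complex.re_le_norm _).trans ?_)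
      rw [norm_mul, Complex.norm_real, Real.norm_eq_abs, mul_comm]
      gcongr
    rw [norm_div, div_le_iff₀ (by linarith)]
    nlinarith [Real.exp_pos (ε * |x|)]
  have := Complex.norm_iteratedDeriv_le_of_forall_mem_sphere_norm_le n hσ
    (hG.diffContOnCl_ball subset_rfl) hbound
  refine this.trans (le_of_eq ?_)
  rw [inv_pow]
  ring
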